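/- A function f : ℍ → ℍ is left quaternionically differentiable at every q ∈ ℍ (i.e., the limit lim_{h→0} h⁻¹[f(q+h) − f(q)] exists at every q) if and only if there exist a, b ∈ ℍ such that f(q) = q·a + b for all q ∈ ℍ. -/

import Mathlib

/-!
Let `L q` be the left derivative of `f` at `q`, so that `f (q + h) = f q + h * L q + o(h)`.
For an imaginary unit `u` and `h ≠ 0`, the map `z ↦ f (q + z * h)` on the slice `ℂ_u = ℝ + ℝ u`
is holomorphic for the complex structure on `ℍ` given by left multiplication by `ℂ_u`, and its
derivative is `h * L (q + z * h)`. Derivatives of holomorphic functions are holomorphic, so, writing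
`D e` for the derivative of `L` at `q` in the real direction `e`, the Cauchy-Riemann equation reads
`D (u * h) = h⁻¹ * u * h * D h` (`slice_deriv`).

In particular `D i = i * D 1`, `D j = j * D 1`, `D k = k * D 1`, whereas `(u, h) = (k, i)` gives
`D j = i⁻¹ * k * i * D i = - j * D 1`. Hence `D 1 = 0`, and `D` vanishes in the four coordinate
directions. So `L` is constant, and `q ↦ f q - q * L 0` has zero Fréchet derivative.
-/

open Quaternion Filter Topology

/-- `f` is left quaternionically differentiable at `q`. -/
def LeftQDifferentiableAt (f : ℍ[ℝ] → ℍ[ℝ]) (q : ℍ[ℝ]) : Prop :=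
  ∃ L : ℍ[ℝ], Tendsto (fun h : ℍ[ℝ] => h⁻¹ * (f (q + h) - f q)) (𝓝[≠] 0) (𝓝 L)

open Asymptotics

/-- The real-linear map `ℂ → ℍ` fixing `ℝ` and sending `I` to `u`. It is an isometric ring
homomorphism when `u` is an imaginary unit. -/
noncomputable def slice (u : ℍ[ℝ]) (z : ℂ) : ℍ[ℝ] := (z.re : ℍ[ℝ]) + z.im • u

/-- The imaginary units of `ℍ`: purely imaginary quaternions of norm one. -/
def IsImUnit (u : ℍ[ℝ]) : Prop := u.re = 0 ∧ u.imI ^ 2 + u.imJ ^ 2 + u.imK ^ 2 = 1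

lemma norm_slice {u : ℍ[ℝ]} (hu : IsImUnit u) (z : ℂ) : ‖slice u z‖ = ‖z‖ := by
  obtain ⟨h0, h1⟩ := hu
  have h : ‖slice u z‖ ^ 2 = ‖z‖ ^ 2 := by
    rw [sq, ← Quaternion.normSq_eq_norm_mul_self, Quaternion.normSq_def', Complex.sq_norm,
      Complex.normSq_apply]
    simp [slice, h0]
    linear_combination z.im ^ 2 * h1
  exact (sq_eq_sq₀ (norm_nonneg _) (norm_nonneg _)).1 h

lemma slice_mul {u : ℍ[ℝ]} (hu : IsImUnit u) (z w : ℂ) :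
    slice u (z * w) = slice u z * slice u w := by
  obtain ⟨h0, h1⟩ := hu
  ext <;> simp [slice, h0]
  · linear_combination (z.im * w.im) * h1
  all_goals ring

lemma slice_add (u : ℍ[ℝ]) (z w : ℂ) : slice u (z + w) = slice u z + slice u w := by
  ext <;> simp [slice] <;> ring

/-- Left multiplication through `slice u` makes `ℍ` a complex normed space. -/
noncomputable abbrev sliceNormedSpace {u : ℍ[ℝ]} (hu : IsImUnit u) : NormedSpace ℂ ℍ[ℝ] where
  smul z x := slice u z * x
  one_smul x := by
    change slice u 1 * x = x
    simp [slice]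
  mul_smul z w x := by
    change slice u (z * w) * x = slice u z * (slice u w * x)
    rw [slice_mul hu, mul_assoc]
  smul_zero z := mul_zero _
  smul_add z x y := mul_add _ _ _
  add_smul z w x := by
    change slice u (z + w) * x = slice u z * x + slice u w * x
    rw [slice_add, add_mul]
  zero_smul x := by
    change slice u 0 * x = 0
    simp [slice]
  norm_smul_le z x := by
    change ‖slice u z * x‖ ≤ ‖z‖ * ‖x‖
    rw [norm_mul, norm_slice hu]

/-- A function that is complex differentiable for the left complex structure given by `u` has a
complex differentiable derivative. -/
lemma slice_holomorphic {u : ℍ[ℝ]} (hu : IsImUnit u) (g g' : ℂ → ℍ[ℝ])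
    (hg : ∀ z, (fun w => g w - g z - slice u (w - z) * g' z) =o[𝓝 z] fun w => w - z) :
    ∃ N, (fun w => g' w - g' 0 - slice u w * N) =o[𝓝 0] fun w => w := by
  let _ := sliceNormedSpace hu
  have hd : ∀ z, HasDerivAt g (g' z) z := fun z => hasDerivAt_iff_isLittleO.2 (hg z)
  have hd' : deriv g = g' := funext fun z => (hd z).deriv
  have hD : Differentiable ℂ g := fun z => (hd z).differentiableAt
  have h2 : DifferentiableAt ℂ g' 0 := by
    rw [← hd']
    exact (hD.contDiff (n := 2)).differentiable_deriv_two 0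
  have h3 := hasDerivAt_iff_isLittleO.1 h2.hasDerivAt
  refine ⟨deriv g' 0, ?_⟩
  simp only [sub_zero] at h3
  exact h3

/-- The limit of left difference quotients as a first-order expansion. -/
lemma isLittleO_of_left {f : ℍ[ℝ] → ℍ[ℝ]} {q L : ℍ[ℝ]}
    (h : Tendsto (fun h : ℍ[ℝ] => h⁻¹ * (f (q + h) - f q)) (𝓝[≠] 0) (𝓝 L)) :
    (fun h => f (q + h) - f q - h * L) =o[𝓝 0] fun h => h := by
  rw [isLittleO_iff]
  intro c hc
  have h1 := Metric.tendsto_nhds.1 h c hc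
  rw [eventually_nhdsWithin_iff] at h1
  filter_upwards [h1] with x hx
  by_cases h0 : x = 0
  · simp [h0]
  have h2 := hx h0
  rw [dist_eq_norm] at h2
  have h3 : f (q + x) - f q - x * L = x * (x⁻¹ * (f (q + x) - f q) - L) := by
    rw [mul_sub, mul_inv_cancel_left₀ h0]
  rw [h3, norm_mul, mul_comm]
  gcongr

/-- The Cauchy-Riemann equation for the left derivative `L` on the real plane
`q + (ℝ + ℝ u) * h`. -/
lemma slice_deriv {f L : ℍ[ℝ] → ℍ[ℝ]}
    (hf : ∀ q, (fun h => f (q + h) - f q - h * L q) =o[𝓝 0] fun h => h)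
    {u : ℍ[ℝ]} (hu : IsImUnit u) (q : ℍ[ℝ]) {h : ℍ[ℝ]} (hh : h ≠ 0) :
    ∃ D, HasDerivAt (fun t : ℝ => L (q + t • h)) D 0 ∧
      HasDerivAt (fun t : ℝ => L (q + t • (u * h))) (h⁻¹ * u * h * D) 0 := by
  obtain ⟨N, hN⟩ := slice_holomorphic hu (fun z => f (q + slice u z * h))
    (fun z => h * L (q + slice u z * h)) (by
      intro z
      have ht : Tendsto (fun w => slice u (w - z) * h) (𝓝 z) (𝓝 0) := by
        rw [tendsto_zero_iff_norm_tendsto_zero]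
        simp only [norm_mul, norm_slice hu]
        have : Continuous fun w : ℂ => ‖w - z‖ * ‖h‖ := by fun_prop
        simpa using this.tendsto z
      have h1 := (hf (q + slice u z * h)).comp_tendsto ht
      have h2 : ((fun x : ℍ[ℝ] => x) ∘ fun w => slice u (w - z) * h) =O[𝓝 z] fun w => w - z := by
        refine IsBigO.of_bound ‖h‖ (Eventually.of_forall fun w => ?_)
        simp [norm_slice hu, mul_comm]
      refine (h1.trans_isBigO h2).congr_left fun w => ?_
      have : q + slice u w * h = q + slice u z * h + slice u (w - z) * h := by
        rw [add_assoc, ← add_mul, ← slice_add, add_sub_cancel]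
      simp only [Function.comp_apply, this, mul_assoc])
  have key : ∀ c : ℂ, HasDerivAt (fun t : ℝ => L (q + t • (slice u c * h)))
      (h⁻¹ * (slice u c * N)) 0 := by
    intro c
    have ht : Tendsto (fun t : ℝ => (t : ℂ) * c) (𝓝 0) (𝓝 0) := by
      have : Continuous fun t : ℝ => (t : ℂ) * c := by fun_prop
      simpa using this.tendsto 0
    have h1 := hN.comp_tendsto ht
    have h2 : ((fun x : ℂ => x) ∘ fun t : ℝ => (t : ℂ) * c) =O[𝓝 0] fun t : ℝ => t := by
      refine IsBigO.of_bound ‖c‖ (Eventually.of_forall fun w => ?_)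
      simp [mul_comm]
    have hs : ∀ t : ℝ, slice u (t * c) = t • slice u c := by
      intro t
      ext <;> simp [slice] <;> ring
    have h3 : HasDerivAt (fun t : ℝ => h * L (q + t • (slice u c * h))) (slice u c * N) 0 := by
      rw [hasDerivAt_iff_isLittleO]
      simp only [sub_zero]
      refine (h1.trans_isBigO h2).congr_left fun t => ?_
      have h0 : slice u 0 = 0 := by simp [slice]
      simp [hs, h0]
    have h4 := h3.const_mul h⁻¹
    simpa only [inv_mul_cancel_left₀ hh] using h4
  refine ⟨h⁻¹ * N, ?_, ?_⟩
  · simpa [slice] using key 1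
  · have := key Complex.I
    have hI : slice u Complex.I = u := by simp [slice]
    rw [hI] at this
    convert this using 1
    simp only [mul_assoc, mul_inv_cancel_left₀ hh]

/-- The basis quaternion `i`. -/
def qI : ℍ[ℝ] := ⟨0, 1, 0, 0⟩

@[simp] lemma qI_coords : qI.re = 0 ∧ qI.imI = 1 ∧ qI.imJ = 0 ∧ qI.imK = 0 :=
  ⟨rfl, rfl, rfl, rfl⟩

/-- The basis quaternion `j`. -/
def qJ : ℍ[ℝ] := ⟨0, 0, 1, 0⟩

@[simp] lemma qJ_coords : qJ.re = 0 ∧ qJ.imI = 0 ∧ qJ.imJ = 1 ∧ qJ.imK = 0 :=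
  ⟨rfl, rfl, rfl, rfl⟩

/-- The basis quaternion `k`. -/
def qK : ℍ[ℝ] := ⟨0, 0, 0, 1⟩

@[simp] lemma qK_coords : qK.re = 0 ∧ qK.imI = 0 ∧ qK.imJ = 0 ∧ qK.imK = 1 :=
  ⟨rfl, rfl, rfl, rfl⟩

/-- A function on `ℍ` whose derivative vanishes along the four coordinate directions is constant. -/
lemma const_of_coord {L : ℍ[ℝ] → ℍ[ℝ]}
    (h : ∀ e ∈ ({1, qI, qJ, qK} : Set ℍ[ℝ]), ∀ q,
      HasDerivAt (fun t : ℝ => L (q + t • e)) 0 0) (q : ℍ[ℝ]) : L q = L 0 := by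
  have key : ∀ e ∈ ({1, qI, qJ, qK} : Set ℍ[ℝ]), ∀ q, ∀ t : ℝ,
      L (q + t • e) = L q := by
    intro e he q t
    have hd : ∀ s : ℝ, HasDerivAt (fun t : ℝ => L (q + t • e)) 0 s := by
      intro s
      have h1 := h e he (q + s • e)
      rw [← sub_self s] at h1
      have h2 := h1.comp_sub_const s s
      refine h2.congr_of_eventuallyEq (Eventually.of_forall fun t => ?_)
      simp only [add_assoc, ← add_smul, add_sub_cancel]
    have := is_const_of_deriv_eq_zero (fun s => (hd s).differentiableAt)
      (fun s => (hd s).deriv) t 0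
    simpa using this
  have hq : q = 0 + q.re • (1 : ℍ[ℝ]) + q.imI • qI
      + q.imJ • qJ + q.imK • qK := by
    ext <;> simp
  rw [hq, key _ (by simp), key _ (by simp), key _ (by simp), key _ (by simp)]

/-- The Cauchy-Riemann equations of the slices with `(u, h)` equal to `(i, 1)`, `(j, 1)`,
`(k, 1)` and `(k, i)` are compatible only if the derivatives of `L` in the coordinate directions
vanish. -/
lemma leftDeriv_const {f L : ℍ[ℝ] → ℍ[ℝ]}
    (hf : ∀ q, (fun h => f (q + h) - f q - h * L q) =o[𝓝 0] fun h => h) (q : ℍ[ℝ]) :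
    L q = L 0 := by
  have ui : IsImUnit qI := by simp [IsImUnit]
  have uj : IsImUnit qJ := by simp [IsImUnit]
  have uk : IsImUnit qK := by simp [IsImUnit]
  have hi0 : qI ≠ 0 := fun h => by simpa using congrArg (fun x : ℍ[ℝ] => x.imI) h
  have hj0 : qJ ≠ 0 := fun h => by simpa using congrArg (fun x : ℍ[ℝ] => x.imJ) h
  have hki : qK * qI = qJ := by ext <;> simp
  apply const_of_coord
  intro e he q
  obtain ⟨D, d1, di⟩ := slice_deriv hf ui q one_ne_zero
  obtain ⟨D2, d1', dj⟩ := slice_deriv hf uj q one_ne_zero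
  obtain ⟨D3, d1'', dk⟩ := slice_deriv hf uk q one_ne_zero
  obtain ⟨D4, di', dj'⟩ := slice_deriv hf uk q hi0
  obtain rfl := d1.unique d1'
  obtain rfl := d1.unique d1''
  simp only [inv_one, one_mul, mul_one] at di dj dk
  obtain rfl := di.unique di'
  rw [hki] at dj'
  have h2 : qI⁻¹ * qK * qI * (qI * D) = -(qJ * D) := by
    have h3 : qK * qI * qI = qI * (-qJ) := by ext <;> simp
    have h4 : qI⁻¹ * qK * qI * (qI * D) = qI⁻¹ * (qK * qI * qI) * D := by simp only [mul_assoc]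
    rw [h4, h3, inv_mul_cancel_left₀ hi0, neg_mul]
  -- the derivative in direction `qJ` is both `qJ * D` and `-(qJ * D)`
  have h1 := dj.unique dj'
  rw [h2] at h1
  have h5 : (2 : ℝ) • (qJ * D) = 0 := by rw [two_smul, ← eq_neg_iff_add_eq_zero, ← h1]
  have hD : D = 0 :=
    (mul_eq_zero.1 ((smul_eq_zero.1 h5).resolve_left two_ne_zero)).resolve_left hj0
  subst hD
  simp only [mul_zero] at di dj dk
  rcases he with rfl | rfl | rfl | rfl <;> assumption

theorem leftQDifferentiable_iff_affine (f : ℍ[ℝ] → ℍ[ℝ]) :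
    (∀ q : ℍ[ℝ], LeftQDifferentiableAt f q) ↔
      ∃ a b : ℍ[ℝ], ∀ q : ℍ[ℝ], f q = q * a + b := by
  constructor
  · intro H
    choose L hL using H
    have hf := fun q => isLittleO_of_left (hL q)
    have hc := leftDeriv_const hf
    refine ⟨L 0, f 0, fun q => ?_⟩
    have hd : ∀ q, HasFDerivAt (fun q => f q - q * L 0) (0 : ℍ[ℝ] →L[ℝ] ℍ[ℝ]) q := by
      intro q
      rw [hasFDerivAt_iff_isLittleO_nhds_zero]
      refine (hf q).congr_left fun h => ?_
      rw [hc q, add_mul, zero_apply]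
      abel
    have := is_const_of_fderiv_eq_zero (𝕜 := ℝ) (fun q => (hd q).differentiableAt)
      (fun q => (hd q).fderiv) q 0
    rw [zero_mul, sub_zero, sub_eq_iff_eq_add'] at this
    exact this
  · rintro ⟨a, b, h⟩ q
    refine ⟨a, tendsto_const_nhds.congr' ?_⟩
    filter_upwards [self_mem_nhdsWithin] with x hx
    have h1 : f (q + x) - f q = x * a := by
      rw [h, h, add_mul]
      abel
    rw [h1, inv_mul_cancel_left₀ hx]
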